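/- arXiv:1402.2322 — 2 statements merged into one kernel-verified Lean document; each statement's English description precedes it below -/
import Mathlib

section
/- Let K be a field with char K ≠ 2, let U and U' be finite-dimensional K-vector spaces, and let ⟨·,·⟩ : U × U' → K be a nondegenerate bilinear pairing. Define bilinear forms on U ⊕ U' by (u⊕α, v⊕β) = ⟨u,β⟩, (u⊕α, v⊕β)_sym = ⟨u,β⟩ + ⟨v,α⟩, and (u⊕α, v⊕β)_skew = ⟨u,β⟩ − ⟨v,α⟩. If L ⊆ U ⊕ U' is a subspace that is Lagrangian for (·,·)_sym, i.e. for every x ∈ U ⊕ U' one has ((x,y)_sym = 0 for all y ∈ L) if and only if x ∈ L, then the kernel of the restriction of (·,·)_skew to L, namely {x ∈ L : (x,y)_skew = 0 for all y ∈ L}, equals (L ∩ (U ⊕ 0)) ⊕ (L ∩ (0 ⊕ U')). -/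
/-- Let `K` be a field with `char K ≠ 2`, `U` and `U'` finite-dimensional
`K`-vector spaces, and `p : U × U' → K` a nondegenerate bilinear pairing. On `U ⊕ U'` define
`(u⊕α, v⊕β)_sym = ⟨u,β⟩ + ⟨v,α⟩` and `(u⊕α, v⊕β)_skew = ⟨u,β⟩ − ⟨v,α⟩`. If `L` is a
`(·,·)_sym`-Lagrangian subspace, then the kernel of `(·,·)_skew` restricted to `L` equals
`(L ∩ (U ⊕ 0)) ⊕ (L ∩ (0 ⊕ U'))`. -/
theorem kernel_skew_restricted_to_sym_lagrangian
    (K U U' : Type*) [Field K] [AddCommGroup U] [Module K U]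
    [AddCommGroup U'] [Module K U'] [FiniteDimensional K U] [FiniteDimensional K U']
    (hchar : (2 : K) ≠ 0)
    (p : U →ₗ[K] U' →ₗ[K] K)
    (hnd_left : ∀ u : U, (∀ β : U', p u β = 0) → u = 0)
    (hnd_right : ∀ β : U', (∀ u : U, p u β = 0) → β = 0)
    (L : Submodule K (U × U'))
    (hLag : ∀ x : U × U', (∀ y ∈ L, p x.1 y.2 + p y.1 x.2 = 0) ↔ x ∈ L) :
    ∀ x : U × U',
      (x ∈ L ∧ ∀ y ∈ L, p x.1 y.2 - p y.1 x.2 = 0) ↔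
        x ∈ (L ⊓ Submodule.fst K U U') ⊔ (L ⊓ Submodule.snd K U U') := by
  -- On `L` the symmetric form vanishes, so (as `2 ≠ 0`) the skew form against `x` vanishes
  -- exactly when both `⟨x.1, y.2⟩` and `⟨y.1, x.2⟩` do; by maximality of `L` this says that
  -- `(x.1, 0)` and `(0, x.2)` both lie in `L`.
  intro x
  constructor
  · rintro ⟨hx, hskew⟩
    have hfst : ∀ y ∈ L, p x.1 y.2 = 0 := by
      intro y hy
      have hsym := (hLag x).2 hx y hy
      have h2 : (2 : K) * p x.1 y.2 = 0 := by linear_combination hsym + hskew y hy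
      exact (mul_eq_zero.1 h2).resolve_left hchar
    have hsnd : ∀ y ∈ L, p y.1 x.2 = 0 := by
      intro y hy
      linear_combination hfst y hy - hskew y hy
    refine Submodule.mem_sup.2 ⟨(x.1, 0), ⟨(hLag _).1 ?_, ?_⟩, (0, x.2), ⟨(hLag _).1 ?_, ?_⟩, ?_⟩
    · intro y hy
      simpa using hfst y hy
    · simp [Submodule.fst]
    · intro y hy
      simpa using hsnd y hy
    · simp [Submodule.snd]
    · simp
  · intro hx
    obtain ⟨⟨u, α⟩, ⟨haL, ha⟩, ⟨v, β⟩, ⟨hbL, hb⟩, rfl⟩ := Submodule.mem_sup.1 hx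
    obtain rfl : α = 0 := by simpa [Submodule.fst] using ha
    obtain rfl : v = 0 := by simpa [Submodule.snd] using hb
    refine ⟨L.add_mem haL hbL, fun y hy => ?_⟩
    have hu : p u y.2 = 0 := by simpa using (hLag _).2 haL y hy
    have hβ : p y.1 β = 0 := by simpa using (hLag _).2 hbL y hy
    simp [hu, hβ]
end

section
/- Let E be a finite-dimensional vector space over a field K and let σ : E × E → K be a bilinear form. Let L ⊆ E* be the image of the linear map a_L : E → E*, β ↦ σ(·,β), and let R ⊆ E* be the image of the linear map a_R : E → E*, α ↦ σ(α,·). Then there is a well-defined bilinear pairing σ⁻¹ : L × R → K given by σ⁻¹(u, v) = σ(α, β) for any α, β ∈ E with v = σ(α,·) and u = σ(·,β) (the value is independent of the choices of α and β), and this pairing is nondegenerate: if u ∈ L satisfies σ⁻¹(u,v) = 0 for all v ∈ R then u = 0, and if v ∈ R satisfies σ⁻¹(u,v) = 0 for all u ∈ L then v = 0. -/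
/-!
An element `u = σ(·,β)` of `L` depends on `α` only through `σ(α,·)`, so evaluating `u` at any
preimage of `v ∈ R` under `α ↦ σ(α,·)` gives the pairing; a linear choice of preimages makes
bilinearity automatic. Nondegeneracy is immediate from `σ⁻¹(σ(·,β), σ(α,·)) = σ(α,β)`: if this
vanishes for all `α` then `σ(·,β) = 0`, and if it vanishes for all `β` then `σ(α,·) = 0`.
-/

/-- Stated for a general codomain `F` because for `F = E →ₗ[K] K` instance search does not find
that the range is a projective module. -/
theorem exists_linear_section_range {K E F : Type*} [Field K] [AddCommGroup E] [Module K E]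
    [AddCommGroup F] [Module K F] (f : E →ₗ[K] F) :
    ∃ s : LinearMap.range f →ₗ[K] E, ∀ v : LinearMap.range f, f (s v) = v := by
  obtain ⟨s, hs⟩ := f.rangeRestrict.exists_rightInverse_of_surjective f.range_rangeRestrict
  exact ⟨s, fun v => congrArg Subtype.val (LinearMap.congr_fun hs v)⟩

/-- Let `E` be a finite-dimensional vector space over a field `K` with
a bilinear form `σ`. Let `L ⊆ E*` be the image of `a_L : β ↦ σ(·,β)` (i.e. of `σ.flip`)
and `R ⊆ E*` the image of `a_R : α ↦ σ(α,·)` (i.e. of `σ`). Then there is a well-defined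
bilinear pairing `σ⁻¹ : L × R → K` with `σ⁻¹(σ(·,β), σ(α,·)) = σ(α,β)` (independent of
the choice of representatives `α`, `β`), and this pairing is nondegenerate. -/
theorem exists_nondegenerate_inverse_pairing
    (K E : Type*) [Field K] [AddCommGroup E] [Module K E] [FiniteDimensional K E]
    (σ : E →ₗ[K] E →ₗ[K] K) :
    ∃ p : LinearMap.range σ.flip →ₗ[K] LinearMap.range σ →ₗ[K] K,
      (∀ α β : E,
        p ⟨σ.flip β, LinearMap.mem_range_self σ.flip β⟩
          ⟨σ α, LinearMap.mem_range_self σ α⟩ = σ α β) ∧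
      (∀ u : LinearMap.range σ.flip, (∀ v : LinearMap.range σ, p u v = 0) → u = 0) ∧
      (∀ v : LinearMap.range σ, (∀ u : LinearMap.range σ.flip, p u v = 0) → v = 0) := by
  -- A linear section `s` of `α ↦ σ(α,·)` onto its image; the pairing is `(u, v) ↦ u (s v)`.
  obtain ⟨s, hs⟩ := exists_linear_section_range σ
  have key : ∀ α β : E,
      ((LinearMap.lcomp K K s).comp (LinearMap.range σ.flip).subtype)
        ⟨σ.flip β, LinearMap.mem_range_self σ.flip β⟩
          ⟨σ α, LinearMap.mem_range_self σ α⟩ = σ α β := fun α β => by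
    change σ (s ⟨σ α, LinearMap.mem_range_self σ α⟩) β = σ α β
    rw [hs]
  refine ⟨(LinearMap.lcomp K K s).comp (LinearMap.range σ.flip).subtype, key, ?_, ?_⟩
  · rintro ⟨_, β, rfl⟩ h
    refine Subtype.ext (LinearMap.ext fun α => ?_)
    exact (key α β).symm.trans (h ⟨σ α, LinearMap.mem_range_self σ α⟩)
  · rintro ⟨_, α, rfl⟩ h
    refine Subtype.ext (LinearMap.ext fun β => ?_)
    exact (key α β).symm.trans (h ⟨σ.flip β, LinearMap.mem_range_self σ.flip β⟩)
end
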